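/- arXiv:1704.04813 — 3 statements merged into one kernel-verified Lean document; each statement's English description precedes it below -/
import Mathlib

section
/- Supergradient inequality for the dual objective: fix ψ : Fin M → ℝ and let (D_i)_{i ∈ Fin M} be a measurable partition of D (pairwise disjoint measurable sets with union D) such that D_i ⊆ {v ∈ D : J v i − ψ i = ψᶜ(v)} for every i. Then for every ψ' : Fin M → ℝ, F(ψ') ≤ F(ψ) + Σ_{i ∈ Fin M} (ω i − (μ(D_i)).toReal) · (ψ' i − ψ i). -/
open MeasureTheory

section IntegralLemmas

variable {α ι : Type*} [MeasurableSpace α] {μ : Measure α}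

theorem integrable_finset_inf' {β : Type*} [NormedAddCommGroup β] [Lattice β] [HasSolidNorm β]
    [IsOrderedAddMonoid β] {s : Finset ι} (hs : s.Nonempty) {f : ι → α → β}
    (hf : ∀ i ∈ s, Integrable (f i) μ) : Integrable (s.inf' hs f) μ :=
  Finset.inf'_induction hs f (p := fun g => Integrable g μ) (fun _ h₁ _ h₂ => h₁.inf h₂) hf

theorem integrable_iInf [Finite ι] {f : ι → α → ℝ} (hf : ∀ i, Integrable (f i) μ) :
    Integrable (fun v => ⨅ i, f i v) μ := by
  cases nonempty_fintype ι
  cases isEmpty_or_nonempty ι with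
  | inl _ => simp
  | inr _ =>
    simpa only [← Finset.inf'_univ_eq_ciInf, ← Finset.inf'_apply] using
      integrable_finset_inf' Finset.univ_nonempty fun i _ => hf i

theorem integral_eq_sum_setIntegral_of_ae_partition [Fintype ι] {E : Type*}
    [NormedAddCommGroup E] [NormedSpace ℝ E] {f : α → E} {s : ι → Set α}
    (hmeas : ∀ i, NullMeasurableSet (s i) μ) (hdisj : Pairwise (Function.onFun (AEDisjoint μ) s))
    (hcover : (⋃ i, s i) =ᵐ[μ] Set.univ) (hf : Integrable f μ) :
    ∫ v, f v ∂μ = ∑ i, ∫ v in s i, f v ∂μ := by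
  rw [← setIntegral_univ, ← setIntegral_congr_set hcover,
    integral_iUnion_ae hmeas hdisj hf.integrableOn, tsum_fintype]

end IntegralLemmas

section DualObjective

variable {D ι : Type*}

/-- The c-transform `ψᶜ(v) = min_i (J v i - ψ i)` of a discrete potential `ψ`. The minimum over
a finite index type is encoded as a real infimum, which is `0` when the index type is empty. -/
noncomputable def cTransform (J : D → ι → ℝ) (ψ : ι → ℝ) (v : D) : ℝ :=
  ⨅ i, (J v i - ψ i)

/-- The Laguerre cell of `i`: the points at which the minimum defining the c-transform of `ψ` is
attained at `i`. Different cells may overlap, along ties. -/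
def laguerreCell (J : D → ι → ℝ) (ψ : ι → ℝ) (i : ι) : Set D :=
  {v | J v i - ψ i = cTransform J ψ v}

/-- The dual objective `F(ψ) = ∑ i, ψ i * ω i + ∫ ψᶜ dμ` of semi-discrete optimal transport from
`μ` to the weights `ω` with cost `J`. -/
noncomputable def dualObjective [MeasurableSpace D] [Fintype ι] (μ : Measure D) (J : D → ι → ℝ)
    (ω ψ : ι → ℝ) : ℝ :=
  ∑ i, ψ i * ω i + ∫ v, cTransform J ψ v ∂μ

theorem cTransform_le [Finite ι] (J : D → ι → ℝ) (ψ : ι → ℝ) (v : D) (i : ι) :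
    cTransform J ψ v ≤ J v i - ψ i :=
  ciInf_le (Set.finite_range _).bddBelow i

variable {J : D → ι → ℝ} {ψ : ι → ℝ}

theorem cTransform_le_sub_of_mem_laguerreCell [Finite ι] {i : ι} {v : D}
    (hv : v ∈ laguerreCell J ψ i) (ψ' : ι → ℝ) :
    cTransform J ψ' v ≤ cTransform J ψ v - (ψ' i - ψ i) :=
  calc
    cTransform J ψ' v ≤ J v i - ψ' i := cTransform_le J ψ' v i
    _ = (J v i - ψ i) - (ψ' i - ψ i) := by ring
    _ = cTransform J ψ v - (ψ' i - ψ i) := by rw [hv]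

variable [MeasurableSpace D] {μ : Measure D} [IsFiniteMeasure μ]

theorem integrable_cTransform [Finite ι] (hJ : ∀ i, Integrable (fun v => J v i) μ) (ψ : ι → ℝ) :
    Integrable (cTransform J ψ) μ :=
  integrable_iInf fun i => (hJ i).sub (integrable_const (ψ i))

theorem setIntegral_cTransform_le [Finite ι] (hJ : ∀ i, Integrable (fun v => J v i) μ) {i : ι}
    {s : Set D} (hmeas : NullMeasurableSet s μ) (hsel : s ≤ᵐ[μ] laguerreCell J ψ i)
    (ψ' : ι → ℝ) :
    ∫ v in s, cTransform J ψ' v ∂μ ≤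
      ∫ v in s, cTransform J ψ v ∂μ - μ.real s * (ψ' i - ψ i) := by
  have hint (φ : ι → ℝ) : IntegrableOn (cTransform J φ) s μ :=
    (integrable_cTransform hJ φ).integrableOn
  have hle : ∀ᵐ v ∂μ.restrict s, cTransform J ψ' v ≤ cTransform J ψ v - (ψ' i - ψ i) :=
    (ae_restrict_iff'₀ hmeas).2 <|
      hsel.mono fun v hv hvs => cTransform_le_sub_of_mem_laguerreCell (hv hvs) ψ'
  calc
    ∫ v in s, cTransform J ψ' v ∂μ ≤ ∫ v in s, (cTransform J ψ v - (ψ' i - ψ i)) ∂μ :=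
      integral_mono_ae (hint ψ') ((hint ψ).sub (integrable_const _)) hle
    _ = ∫ v in s, cTransform J ψ v ∂μ - μ.real s * (ψ' i - ψ i) := by
      rw [integral_sub (hint ψ) (integrable_const _), setIntegral_const, smul_eq_mul]

variable [Fintype ι]

theorem integral_cTransform_le (hJ : ∀ i, Integrable (fun v => J v i) μ) {s : ι → Set D}
    (hmeas : ∀ i, NullMeasurableSet (s i) μ) (hdisj : Pairwise (Function.onFun (AEDisjoint μ) s))
    (hcover : (⋃ i, s i) =ᵐ[μ] Set.univ) (hsel : ∀ i, s i ≤ᵐ[μ] laguerreCell J ψ i)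
    (ψ' : ι → ℝ) :
    ∫ v, cTransform J ψ' v ∂μ ≤
      ∫ v, cTransform J ψ v ∂μ - ∑ i, μ.real (s i) * (ψ' i - ψ i) := by
  have hsplit (φ : ι → ℝ) : ∫ v, cTransform J φ v ∂μ = ∑ i, ∫ v in s i, cTransform J φ v ∂μ :=
    integral_eq_sum_setIntegral_of_ae_partition hmeas hdisj hcover (integrable_cTransform hJ φ)
  rw [hsplit ψ', hsplit ψ, ← Finset.sum_sub_distrib]
  exact Finset.sum_le_sum fun i _ => setIntegral_cTransform_le hJ (hmeas i) (hsel i) ψ'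

theorem dual_objective_supergradient_general (hJ : ∀ i, Integrable (fun v => J v i) μ)
    (ω : ι → ℝ) {s : ι → Set D} (hmeas : ∀ i, NullMeasurableSet (s i) μ)
    (hdisj : Pairwise (Function.onFun (AEDisjoint μ) s)) (hcover : (⋃ i, s i) =ᵐ[μ] Set.univ)
    (hsel : ∀ i, s i ≤ᵐ[μ] laguerreCell J ψ i) (ψ' : ι → ℝ) :
    dualObjective μ J ω ψ' ≤
      dualObjective μ J ω ψ + ∑ i, (ω i - μ.real (s i)) * (ψ' i - ψ i) :=
  calc
    dualObjective μ J ω ψ'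
      ≤ ∑ i, ψ' i * ω i +
          (∫ v, cTransform J ψ v ∂μ - ∑ i, μ.real (s i) * (ψ' i - ψ i)) :=
        add_le_add_right (integral_cTransform_le hJ hmeas hdisj hcover hsel ψ') _
    _ = dualObjective μ J ω ψ + ∑ i, (ω i - μ.real (s i)) * (ψ' i - ψ i) := by
        simp only [dualObjective, sub_mul, mul_sub, Finset.sum_sub_distrib, mul_comm (ω _)]
        ring

end DualObjective

/-- Supergradient inequality for the dual objective: if `(D_i)` is a measurable
partition of `D` with `D_i` contained in the set where the minimum defining the
c-transform is attained at `i`, then `ω - μ(D_i)` is a supergradient of `F` at `ψ`. -/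
theorem dual_objective_supergradient {D : Type*} [MeasurableSpace D]
    (μ : Measure D) [IsFiniteMeasure μ] (M : ℕ) (hM : 0 < M)
    (J : D → Fin M → ℝ) (hJ : ∀ i, Integrable (fun v => J v i) μ)
    (ω : Fin M → ℝ) (F : (Fin M → ℝ) → ℝ)
    (hF : ∀ ψ : Fin M → ℝ,
      F ψ = ∑ i, ψ i * ω i + ∫ v, (⨅ i, (J v i - ψ i)) ∂μ)
    (ψ : Fin M → ℝ) (Dset : Fin M → Set D)
    (hmeas : ∀ i, MeasurableSet (Dset i))
    (hdisj : Pairwise (Function.onFun Disjoint Dset))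
    (hcover : (⋃ i, Dset i) = Set.univ)
    (hsel : ∀ i, Dset i ⊆ {v | J v i - ψ i = ⨅ j, (J v j - ψ j)})
    (ψ' : Fin M → ℝ) :
    F ψ' ≤ F ψ + ∑ i, (ω i - (μ (Dset i)).toReal) * (ψ' i - ψ i) := by
  obtain rfl : F = dualObjective μ J ω := funext hF
  exact dual_objective_supergradient_general hJ ω (fun i => (hmeas i).nullMeasurableSet)
    (fun _ _ hij => (hdisj hij).aedisjoint) hcover.eventuallyEq
    (fun i => (hsel i).eventuallyLE) ψ'
end

section
/- Optimal bandwidth allocation achieves the lower bound: let Y be a positive natural number, B > 0, and u, E : Fin Y → ℝ with u r > 0 and E r > 0 for all r. Define W* r = B · (u r / E r) / Σ_{k ∈ Fin Y} (u k / E k). Then W* r > 0 for all r, Σ_{r ∈ Fin Y} W* r = B, and u r / (W* r · E r) = (1/B) · Σ_{k ∈ Fin Y} u k / E k for every r. Consequently (1/B) · Σ_{r ∈ Fin Y} u r / E r is the least element of the set { max over r of u r / (W r · E r) : W : Fin Y → ℝ, W r > 0 for all r, Σ_r W r = B }. -/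
/-!
Only the ratios `a r = u r / E r` matter: the service time of user `r` is `a r / W r`. The ratio of
totals `(∑ a) / (∑ W)` is a weighted average of these times with weights proportional to `W`, so it
never exceeds the largest of them. Allocating the bandwidth proportionally to `a` makes all the
times equal, and the bound is attained.
-/

open Finset

/-- The allocation that splits a total bandwidth `B` proportionally to the demands `a`; a user's
demand is the ratio of load to spectral efficiency. All values are `0` if the demands sum to `0`. -/
def proportionalAllocation {ι K : Type*} [Fintype ι] [Semifield K] (B : K) (a : ι → K) (i : ι) :
    K :=
  B * a i / ∑ k, a k

section Semifield

variable {ι K : Type*} [Fintype ι] [Semifield K]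

lemma sum_proportionalAllocation (B : K) {a : ι → K} (ha : ∑ k, a k ≠ 0) :
    ∑ i, proportionalAllocation B a i = B := by
  simp only [proportionalAllocation]
  rw [← sum_div, ← mul_sum, mul_div_cancel_right₀ B ha]

lemma div_proportionalAllocation (B : K) {a : ι → K} {i : ι} (ha : a i ≠ 0) :
    a i / proportionalAllocation B a i = (∑ k, a k) / B := by
  rw [proportionalAllocation, div_div_eq_mul_div, mul_comm B, mul_div_mul_left _ _ ha]

end Semifield

section LinearOrder

variable {ι K : Type*} [Semifield K] [LinearOrder K] [IsStrictOrderedRing K]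

lemma sum_div_sum_le_sup'_div {s : Finset ι} (hs : s.Nonempty) (a : ι → K) {w : ι → K}
    (hw : ∀ i ∈ s, 0 < w i) :
    (∑ i ∈ s, a i) / ∑ i ∈ s, w i ≤ s.sup' hs fun i => a i / w i := by
  rw [div_le_iff₀ (sum_pos hw hs), mul_sum]
  exact sum_le_sum fun i hi =>
    (div_le_iff₀ (hw i hi)).mp (le_sup' (fun i => a i / w i) hi)

variable [Fintype ι]

lemma proportionalAllocation_pos {B : K} (hB : 0 < B) {a : ι → K} (ha : ∀ i, 0 < a i) (i : ι) :
    0 < proportionalAllocation B a i :=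
  div_pos (mul_pos hB (ha i)) (sum_pos (fun k _ => ha k) ⟨i, mem_univ i⟩)

variable [Nonempty ι]

lemma isLeast_sup'_div_of_sum_eq {B : K} (hB : 0 < B) {a : ι → K} (ha : ∀ i, 0 < a i) :
    IsLeast {T : K | ∃ W : ι → K, (∀ i, 0 < W i) ∧ ∑ i, W i = B ∧
      T = univ.sup' univ_nonempty fun i => a i / W i} ((∑ i, a i) / B) := by
  have sum_ne_zero : ∑ i, a i ≠ 0 := (sum_pos (fun i _ => ha i) univ_nonempty).ne'
  constructor
  · refine ⟨proportionalAllocation B a, proportionalAllocation_pos hB ha,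
      sum_proportionalAllocation B sum_ne_zero, ?_⟩
    simp only [div_proportionalAllocation B (ha _).ne', sup'_const]
  · rintro _ ⟨W, hW, rfl, rfl⟩
    exact sum_div_sum_le_sup'_div univ_nonempty a fun i _ => hW i

theorem optimal_bandwidth_allocation_general {B : K} (hB : 0 < B) {u E : ι → K}
    (hu : ∀ r, 0 < u r) (hE : ∀ r, 0 < E r) {Wstar : ι → K}
    (hWstar : ∀ r, Wstar r = B * (u r / E r) / ∑ k, u k / E k) :
    (∀ r, 0 < Wstar r) ∧ (∑ r, Wstar r = B) ∧
    (∀ r, u r / (Wstar r * E r) = (1 / B) * ∑ k, u k / E k) ∧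
    IsLeast {T : K | ∃ W : ι → K, (∀ r, 0 < W r) ∧ (∑ r, W r = B) ∧
        T = univ.sup' univ_nonempty fun r => u r / (W r * E r)}
      ((1 / B) * ∑ k, u k / E k) := by
  obtain rfl : Wstar = proportionalAllocation B fun r => u r / E r := funext hWstar
  have demand_pos (r : ι) : 0 < u r / E r := div_pos (hu r) (hE r)
  have sum_demand_pos : 0 < ∑ r, u r / E r := sum_pos (fun r _ => demand_pos r) univ_nonempty
  simp only [div_mul_eq_div_div_swap, one_div_mul_eq_div]
  exact ⟨proportionalAllocation_pos hB demand_pos,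
    sum_proportionalAllocation B sum_demand_pos.ne',
    fun r => div_proportionalAllocation B (a := fun r => u r / E r) (demand_pos r).ne',
    isLeast_sup'_div_of_sum_eq hB demand_pos⟩

end LinearOrder

/-- The proportional bandwidth allocation `W* r = B * (u r / E r) / ∑ k, u k / E k`
is positive, sums to `B`, equalizes all service times at `(1/B) * ∑ k, u k / E k`,
and this common value is the least achievable max service time over all positive
allocations summing to `B`. -/
theorem optimal_bandwidth_allocation (Y : ℕ) (hY : 0 < Y) (B : ℝ) (hB : 0 < B)
    (u E : Fin Y → ℝ) (hu : ∀ r, 0 < u r) (hE : ∀ r, 0 < E r)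
    (Wstar : Fin Y → ℝ)
    (hWstar : ∀ r, Wstar r = B * (u r / E r) / ∑ k, u k / E k) :
    (∀ r, 0 < Wstar r) ∧ (∑ r, Wstar r = B) ∧
    (∀ r, u r / (Wstar r * E r) = (1 / B) * ∑ k, u k / E k) ∧
    IsLeast {T : ℝ | ∃ W : Fin Y → ℝ, (∀ r, 0 < W r) ∧ (∑ r, W r = B) ∧
        T = ⨆ r, u r / (W r * E r)}
      ((1 / B) * ∑ k, u k / E k) := by
  have : Nonempty (Fin Y) := Fin.pos_iff_nonempty.mp hY
  simpa only [sup'_univ_eq_ciSup] using optimal_bandwidth_allocation_general hB hu hE hWstar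
end

section
/- Exchange inequality at an optimal partition: let (D, 𝒜, μ) be a measure space with μ a finite measure, M a positive natural number, h : Fin M → D → ℝ with each h i μ-integrable and measurable, and g : Fin M → ℝ → ℝ. Define the cost of a measurable partition (A_i)_{i ∈ Fin M} of D as C(A) = Σ_{i ∈ Fin M} ( ∫_{A_i} h i dμ + g i ((μ(A_i)).toReal) ). Suppose (A_i) minimizes C over all measurable partitions of D. Then for all l ≠ m in Fin M and every measurable set S ⊆ A_m: ∫_S h m dμ + g m ((μ(A_m)).toReal) + g l ((μ(A_l)).toReal) ≤ ∫_S h l dμ + g l ((μ(A_l)).toReal + (μ(S)).toReal) + g m ((μ(A_m)).toReal − (μ(S)).toReal). -/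
open MeasureTheory

/-! Give all of `S` to cell `l`. Only cells `l` and `m` change, so their contributions to the cost
cannot drop; since costs are an integral plus a function of the mass, the integrals over `A l` and
over `A m` cancel and only integrals over `S` survive. -/

open scoped ENNReal

/-- The partitions over which the cost is minimized: families of pairwise disjoint measurable
sets covering the space. Cells are allowed to be empty. -/
structure IsMeasurablePartition {D ι : Type*} [MeasurableSpace D] (A : ι → Set D) : Prop where
  measurableSet : ∀ i, MeasurableSet (A i)
  disjoint : Pairwise (Function.onFun Disjoint A)
  iUnion_eq_univ : ⋃ i, A i = Set.univ

/-- The competitor of the exchange argument: the family obtained from `A` by moving all points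
of `S` to cell `l`, whichever cells they came from. -/
def reassign {D ι : Type*} [DecidableEq ι] (A : ι → Set D) (l : ι) (S : Set D) : ι → Set D :=
  Function.update (fun i => A i \ S) l (A l ∪ S)

section Reassign

variable {D ι : Type*} [DecidableEq ι] {A : ι → Set D} {i l : ι} {S : Set D}

theorem reassign_self : reassign A l S l = A l ∪ S :=
  Function.update_self ..

theorem reassign_of_ne (hil : i ≠ l) : reassign A l S i = A i \ S :=
  Function.update_of_ne hil ..

theorem mem_reassign_of_mem {x : D} (hx : x ∈ S) : x ∈ reassign A l S i ↔ i = l := by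
  rcases eq_or_ne i l with rfl | hil
  · simp [reassign_self, hx]
  · simp [reassign_of_ne hil, hx, hil]

theorem mem_reassign_of_notMem {x : D} (hx : x ∉ S) : x ∈ reassign A l S i ↔ x ∈ A i := by
  rcases eq_or_ne i l with rfl | hil
  · simp [reassign_self, hx]
  · simp [reassign_of_ne hil, hx]

theorem reassign_eq_of_disjoint (hil : i ≠ l) (hS : Disjoint (A i) S) :
    reassign A l S i = A i := by
  rw [reassign_of_ne hil, hS.sdiff_eq_left]

end Reassign

section Exchange

variable {D ι : Type*} [MeasurableSpace D] {A : ι → Set D}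

theorem isMeasurablePartition_reassign [DecidableEq ι] (hA : IsMeasurablePartition A) (l : ι)
    {S : Set D} (hS : MeasurableSet S) : IsMeasurablePartition (reassign A l S) where
  measurableSet i := by
    rcases eq_or_ne i l with rfl | hil
    · rw [reassign_self]
      exact (hA.measurableSet i).union hS
    · rw [reassign_of_ne hil]
      exact (hA.measurableSet i).diff hS
  disjoint i j hij := Set.disjoint_left.mpr fun x hi hj => by
    by_cases hx : x ∈ S
    · rw [mem_reassign_of_mem hx] at hi hj
      exact hij (hi.trans hj.symm)
    · rw [mem_reassign_of_notMem hx] at hi hj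
      exact Set.disjoint_left.mp (hA.disjoint hij) hi hj
  iUnion_eq_univ := Set.iUnion_eq_univ_iff.mpr fun x => by
    by_cases hx : x ∈ S
    · exact ⟨l, (mem_reassign_of_mem hx).mpr rfl⟩
    · obtain ⟨i, hi⟩ := Set.iUnion_eq_univ_iff.mp hA.iUnion_eq_univ x
      exact ⟨i, (mem_reassign_of_notMem hx).mpr hi⟩

theorem IsMeasurablePartition.cost_add_cost_le_of_isMinOn [Fintype ι] {R : Type*}
    [AddCommMonoid R] [PartialOrder R] [IsOrderedCancelAddMonoid R] {c : ι → Set D → R}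
    (hA : IsMeasurablePartition A)
    (hmin : IsMinOn (fun B => ∑ i, c i (B i)) {B | IsMeasurablePartition B} A)
    {l m : ι} (hlm : l ≠ m) {S : Set D} (hS : MeasurableSet S) (hSm : S ⊆ A m) :
    c l (A l) + c m (A m) ≤ c l (A l ∪ S) + c m (A m \ S) := by
  classical
  have sum_split (B : ι → Set D) :
      ∑ i, c i (B i) = c l (B l) + c m (B m) + ∑ i ∈ {l, m}ᶜ, c i (B i) := by
    rw [← Finset.sum_add_sum_compl {l, m}, Finset.sum_pair hlm]
  have other_cells : ∑ i ∈ {l, m}ᶜ, c i (reassign A l S i) = ∑ i ∈ {l, m}ᶜ, c i (A i) := by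
    refine Finset.sum_congr rfl fun i hi => ?_
    obtain ⟨hil, him⟩ : i ≠ l ∧ i ≠ m := by simpa using hi
    rw [reassign_eq_of_disjoint hil ((hA.disjoint him).mono_right hSm)]
  have cost_le := isMinOn_iff.mp hmin _ (isMeasurablePartition_reassign hA l hS)
  rw [sum_split A, sum_split (reassign A l S), other_cells, reassign_self,
    reassign_of_ne hlm.symm] at cost_le
  exact le_of_add_le_add_right cost_le

end Exchange

/-- Masses are passed to `g` in `ℝ≥0∞`: on a cell of infinite mass `toReal` would be the junk
value `0`. -/
theorem optimal_partition_exchange_inequality_general {D ι : Type*} [MeasurableSpace D]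
    [Fintype ι] {μ : Measure D} {h : ι → D → ℝ} (hint : ∀ i, Integrable (h i) μ)
    {g : ι → ℝ≥0∞ → ℝ} {A : ι → Set D} (hA : IsMeasurablePartition A)
    (hmin : IsMinOn (fun B => ∑ i, ((∫ v in B i, h i v ∂μ) + g i (μ (B i))))
      {B | IsMeasurablePartition B} A)
    {l m : ι} (hlm : l ≠ m) {S : Set D} (hS : MeasurableSet S) (hSm : S ⊆ A m)
    (hμS : μ S ≠ ∞) :
    (∫ v in S, h m v ∂μ) + g m (μ (A m)) + g l (μ (A l)) ≤
      (∫ v in S, h l v ∂μ) + g l (μ (A l) + μ S) + g m (μ (A m) - μ S) := by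
  have exchange := hA.cost_add_cost_le_of_isMinOn
    (c := fun i s => (∫ v in s, h i v ∂μ) + g i (μ s)) hmin hlm hS hSm
  have hdisj : Disjoint (A l) S := (hA.disjoint hlm).mono_right hSm
  rw [setIntegral_union hdisj hS (hint l).integrableOn (hint l).integrableOn,
    setIntegral_sdiff hS (hint m).integrableOn hSm, measure_union hdisj hS,
    measure_sdiff hSm hS.nullMeasurableSet hμS] at exchange
  linarith

/-- Exchange inequality at an optimal partition: if `(A_i)` minimizes the total
cost `∑ i, (∫_{A_i} h i dμ + g i (μ(A_i)))` over all measurable partitions of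
`D`, then moving any measurable subset `S ⊆ A_m` to cell `l` cannot decrease
the cost. -/
theorem optimal_partition_exchange_inequality {D : Type*} [MeasurableSpace D]
    (μ : Measure D) [IsFiniteMeasure μ] (M : ℕ) (hM : 0 < M)
    (h : Fin M → D → ℝ)
    (hint : ∀ i, Integrable (h i) μ) (hmeas : ∀ i, Measurable (h i))
    (g : Fin M → ℝ → ℝ)
    (A : Fin M → Set D)
    (hAmeas : ∀ i, MeasurableSet (A i))
    (hAdisj : Pairwise (Function.onFun Disjoint A))
    (hAcover : (⋃ i, A i) = Set.univ)
    (hopt : ∀ A' : Fin M → Set D,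
      (∀ i, MeasurableSet (A' i)) →
      Pairwise (Function.onFun Disjoint A') →
      (⋃ i, A' i) = Set.univ →
      (∑ i, ((∫ v in A i, h i v ∂μ) + g i ((μ (A i)).toReal))) ≤
        ∑ i, ((∫ v in A' i, h i v ∂μ) + g i ((μ (A' i)).toReal)))
    (l m : Fin M) (hlm : l ≠ m)
    (S : Set D) (hS : MeasurableSet S) (hSm : S ⊆ A m) :
    (∫ v in S, h m v ∂μ) + g m ((μ (A m)).toReal) + g l ((μ (A l)).toReal) ≤
      (∫ v in S, h l v ∂μ) + g l ((μ (A l)).toReal + (μ S).toReal) +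
        g m ((μ (A m)).toReal - (μ S).toReal) := by
  have hmin : IsMinOn (fun B => ∑ i, ((∫ v in B i, h i v ∂μ) + g i (μ (B i)).toReal))
      {B | IsMeasurablePartition B} A :=
    isMinOn_iff.mpr fun B hB => hopt B hB.measurableSet hB.disjoint hB.iUnion_eq_univ
  simpa only [ENNReal.toReal_add (measure_ne_top μ _) (measure_ne_top μ _),
    ENNReal.toReal_sub_of_le (measure_mono hSm) (measure_ne_top μ _)] using
    optimal_partition_exchange_inequality_general (g := fun i t => g i t.toReal) hint
      ⟨hAmeas, hAdisj, hAcover⟩ hmin hlm hS hSm (measure_ne_top μ S)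
end
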